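/- Let A ∈ ℝ^{n×n}, B ∈ ℝ^{n×m}, C ∈ ℝ^{q×n}, F ∈ ℝ^{n×q}, let N ∈ ℕ, let a_{ij} ≥ 0 (i,j = 1,…,N) with a_{ii} = 0, let ι_i ∈ {0,1}, set d_in(i) = Σ_j a_{ij}, let L be the Laplacian matrix of the weights (a_{ij}), L̄ = L + diag(ι_1,…,ι_N) with entries ℓ̄_{ij}, D_in = diag(d_in(1),…,d_in(N)), and D̄ = I − (2I + D_in)^{−1} L̄. Let κ_1, …, κ_N ∈ {0,…,κ̄} be delays, let x_r satisfy x_r(k+1) = A x_r(k), y_r = C x_r, and suppose x_i, x̂_i, χ_i, u_i (i = 1,…,N) satisfy, for all k ≥ 0, x_i(k+1) = A x_i(k) + B u_i(k − κ_i), y_i(k) = C x_i(k), x̂_i(k+1) = A x̂_i(k) + B ζ̂_{i2}(k) + F( ζ̄_i(k) − C x̂_i(k) ), and χ_i(k+1) = A χ_i(k) + B u_i(k − κ_i) + A x̂_i(k) − A ζ̂_{i1}(k), where ζ̄_i(k) = (2 + d_in(i))^{−1} [ Σ_{j=1}^N a_{ij}(y_i(k) − y_j(k)) + ι_i (y_i(k)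 − y_r(k)) ], ζ̂_{i1}(k) = (2 + d_in(i))^{−1} Σ_{j=1}^N ℓ̄_{ij} χ_j(k), and ζ̂_{i2}(k) = (2 + d_in(i))^{−1} Σ_{j=1}^N ℓ̄_{ij} u_j(k − κ_j). Let x̃ denote the stacked vector with blocks x̃_i = x_i − x_r, x̂ the stacked vector with blocks x̂_i, χ the stacked vector with blocks χ_i, and define ē(k) = ((I − D̄) ⊗ I_n) x̃(k) − x̂(k) and e(k) = x̃(k) − χ(k). Then for all k ≥ 0: ē(k+1) = (I_N ⊗ (A − FC)) ē(k) and e(k+1) = (D̄ ⊗ A) e(k) + (I_N ⊗ A) ē(k). -/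

import Mathlib

open Matrix Filter Topology Kronecker
open scoped Classical

noncomputable section

/-- A complex square matrix is Schur stable if all its eigenvalues lie in the open unit disc. -/
def SchurStableC {ι : Type*} [Fintype ι] [DecidableEq ι] (M : Matrix ι ι ℂ) : Prop :=
  ∀ μ ∈ spectrum ℂ M, ‖μ‖ < 1

/-- A real square matrix is Schur stable if all its (complex) eigenvalues lie in the open
unit disc. -/
def SchurStable {ι : Type*} [Fintype ι] [DecidableEq ι] (M : Matrix ι ι ℝ) : Prop :=
  SchurStableC (M.map Complex.ofReal)

/-- All eigenvalues of a real square matrix lie in the closed unit disc. -/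
def EigInClosedUnitDisc {ι : Type*} [Fintype ι] [DecidableEq ι] (M : Matrix ι ι ℝ) : Prop :=
  ∀ μ ∈ spectrum ℂ (M.map Complex.ofReal), ‖μ‖ ≤ 1

/-- The pair (A,B) is stabilizable. -/
def Stabilizable {n m : ℕ} (A : Matrix (Fin n) (Fin n) ℝ) (B : Matrix (Fin n) (Fin m) ℝ) : Prop :=
  ∃ K : Matrix (Fin m) (Fin n) ℝ, SchurStable (A - B * K)

/-- The pair (C,A) is detectable. -/
def Detectable {n q : ℕ} (C : Matrix (Fin q) (Fin n) ℝ) (A : Matrix (Fin n) (Fin n) ℝ) : Prop :=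
  ∃ F : Matrix (Fin n) (Fin q) ℝ, SchurStable (A - F * C)

/-- `P` is a positive definite solution of the discrete algebraic Riccati equation
`AᵀPA − P − AᵀPB(I + BᵀPB)⁻¹BᵀPA + εI = 0`. -/
def IsDARESol {n m : ℕ} (A : Matrix (Fin n) (Fin n) ℝ) (B : Matrix (Fin n) (Fin m) ℝ)
    (ε : ℝ) (P : Matrix (Fin n) (Fin n) ℝ) : Prop :=
  P.PosDef ∧
    Aᵀ * P * A - P - Aᵀ * P * B * (1 + Bᵀ * P * B)⁻¹ * (Bᵀ * P * A)
      + ε • (1 : Matrix (Fin n) (Fin n) ℝ) = 0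

/-- The low-gain feedback `K = (I + BᵀPB)⁻¹BᵀPA`. -/
def gainK {n m : ℕ} (A : Matrix (Fin n) (Fin n) ℝ) (B : Matrix (Fin n) (Fin m) ℝ)
    (P : Matrix (Fin n) (Fin n) ℝ) : Matrix (Fin m) (Fin n) ℝ :=
  (1 + Bᵀ * P * B)⁻¹ * (Bᵀ * P * A)

/-- `ω_max`: zero if `A` is Schur stable, otherwise the largest `ω ∈ [0,π]` with
`det(e^{iω}I − A) = 0`. -/
def omegaMax {n : ℕ} (A : Matrix (Fin n) (Fin n) ℝ) : ℝ :=
  if SchurStable A then 0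
  else sSup {ω : ℝ | ω ∈ Set.Icc 0 Real.pi ∧
    (Complex.exp (ω * Complex.I) • (1 : Matrix (Fin n) (Fin n) ℂ)
      - A.map Complex.ofReal).det = 0}

/-- In-degree `d_in(i) = Σ_j a_{ij}`. -/
def dIn {N : ℕ} (a : Fin N → Fin N → ℝ) (i : Fin N) : ℝ := ∑ j, a i j

/-- The Laplacian matrix of the weights `a`. -/
def lapL {N : ℕ} (a : Fin N → Fin N → ℝ) : Matrix (Fin N) (Fin N) ℝ :=
  Matrix.of fun i j => if i = j then dIn a i else -a i j

/-- The expanded Laplacian `L̄ = L + diag(ι)`. -/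
def lapLbar {N : ℕ} (a : Fin N → Fin N → ℝ) (ι : Fin N → ℝ) : Matrix (Fin N) (Fin N) ℝ :=
  lapL a + Matrix.diagonal ι

/-- `D̄ = I − (2I + D_in)⁻¹ L̄`. -/
def DbarM {N : ℕ} (a : Fin N → Fin N → ℝ) (ι : Fin N → ℝ) : Matrix (Fin N) (Fin N) ℝ :=
  1 - ((2 : ℝ) • (1 : Matrix (Fin N) (Fin N) ℝ) + Matrix.diagonal (dIn a))⁻¹ * lapLbar a ι

/-!
Put `W = I - D̄`. The rows of the Laplacian sum to zero, so `ζ̄` measures the agents relative to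
the reference, and each network quantity `ζ̄`, `ζ̂₁`, `ζ̂₂` is `W` applied to the stacked
`C x̃_j`, `χ_j`, `u_j(k - κ_j)`. Hence the inputs drive `W x̃` exactly as they drive `x̂`, and drive
`x̃` exactly as they drive `χ`: they cancel in `ē = W x̃ - x̂` and in `e = x̃ - χ`. What is left
of `e` is `A (x̃ - χ) - A x̂ + W A χ`, and rewriting `x̂ = W x̃ - ē` turns this into
`(I - W) A e + A ē`.
-/

section Rows

variable {R μ ν n p : Type*} [NonUnitalCommSemiring R] [Fintype n]

theorem mul_transpose_eq_of_mulVec (X : Matrix ν n R) (A : Matrix p n R) :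
    X * Aᵀ = of fun i => A *ᵥ X i :=
  funext fun i => vecMul_transpose A (X i)

theorem kronecker_mulVec_vec_transpose [Fintype ν] (M : Matrix μ ν R) (A : Matrix p n R)
    (X : Matrix ν n R) :
    (M ⊗ₖ A) *ᵥ vec Xᵀ = vec (M * X * Aᵀ)ᵀ := by
  rw [kronecker_mulVec_vec, transpose_mul, transpose_mul, transpose_transpose, Matrix.mul_assoc]

end Rows

/-- The closed loop of the partial-state protocol, for an arbitrary matrix `D` in the role of `D̄`.
Row `i` of `X k`, `U k`, `Xhat k`, `Chi k` is the signal of agent `i` at time `k`: `X` is the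
tracking error `x̃`, `U` the delayed input, `Xhat` and `Chi` are the protocol states. With signals
as rows, `A` acts by right multiplication by `Aᵀ`, and the network by left multiplication; as `vec`
stacks columns, the stacked vector of the paper is `vec (X k)ᵀ`. -/
structure IsProtocolTrajectory {R ν n m q : Type*} [CommRing R] [Fintype ν] [DecidableEq ν]
    [Fintype n] [Fintype m] [Fintype q] (D : Matrix ν ν R) (A : Matrix n n R) (B : Matrix n m R)
    (C : Matrix q n R) (F : Matrix n q R) (X : ℕ → Matrix ν n R) (U : ℕ → Matrix ν m R)
    (Xhat Chi : ℕ → Matrix ν n R) : Prop where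
  trackingError_succ : ∀ k, X (k + 1) = X k * Aᵀ + U k * Bᵀ
  xhat_succ : ∀ k, Xhat (k + 1) =
    Xhat k * Aᵀ + (1 - D) * U k * Bᵀ + ((1 - D) * (X k * Cᵀ) - Xhat k * Cᵀ) * Fᵀ
  chi_succ : ∀ k, Chi (k + 1) =
    Chi k * Aᵀ + U k * Bᵀ + Xhat k * Aᵀ - (1 - D) * Chi k * Aᵀ

namespace IsProtocolTrajectory

variable {R ν n m q : Type*} [CommRing R] [Fintype ν] [DecidableEq ν] [Fintype n] [Fintype m]
  [Fintype q] {D : Matrix ν ν R} {A : Matrix n n R} {B : Matrix n m R} {C : Matrix q n R}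
  {F : Matrix n q R} {X : ℕ → Matrix ν n R} {U : ℕ → Matrix ν m R} {Xhat Chi : ℕ → Matrix ν n R}

theorem vec_observerError_succ (h : IsProtocolTrajectory D A B C F X U Xhat Chi) (k : ℕ) :
    vec ((1 - D) * X (k + 1) - Xhat (k + 1))ᵀ
      = ((1 : Matrix ν ν R) ⊗ₖ (A - F * C)) *ᵥ vec ((1 - D) * X k - Xhat k)ᵀ := by
  rw [kronecker_mulVec_vec_transpose, Matrix.one_mul, h.trackingError_succ, h.xhat_succ]
  congr 2
  simp only [transpose_sub, transpose_mul, Matrix.mul_add, Matrix.mul_sub, Matrix.sub_mul,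
    ← Matrix.mul_assoc]
  abel

theorem vec_protocolError_succ (h : IsProtocolTrajectory D A B C F X U Xhat Chi) (k : ℕ) :
    vec (X (k + 1) - Chi (k + 1))ᵀ
      = (D ⊗ₖ A) *ᵥ vec (X k - Chi k)ᵀ
        + ((1 : Matrix ν ν R) ⊗ₖ A) *ᵥ vec ((1 - D) * X k - Xhat k)ᵀ := by
  rw [kronecker_mulVec_vec_transpose, kronecker_mulVec_vec_transpose, ← vec_add,
    ← transpose_add, h.trackingError_succ, h.chi_succ]
  congr 2
  simp only [Matrix.mul_sub, Matrix.sub_mul, Matrix.one_mul]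
  abel

end IsProtocolTrajectory

section Network

variable {N : ℕ} (a : Fin N → Fin N → ℝ) (ι : Fin N → ℝ)

theorem one_sub_DbarM (hd : ∀ i, 2 + dIn a i ≠ 0) :
    1 - DbarM a ι = diagonal (fun i => (2 + dIn a i)⁻¹) * lapLbar a ι := by
  have inv_eq : ((2 : ℝ) • (1 : Matrix (Fin N) (Fin N) ℝ) + diagonal (dIn a))⁻¹
      = diagonal fun i => (2 + dIn a i)⁻¹ := by
    refine inv_eq_right_inv ?_
    rw [smul_one_eq_diagonal, diagonal_add, diagonal_mul_diagonal, ← diagonal_one]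
    exact congrArg diagonal (funext fun i => mul_inv_cancel₀ (hd i))
  rw [DbarM, inv_eq, sub_sub_cancel]

theorem one_sub_DbarM_mul (hd : ∀ i, 2 + dIn a i ≠ 0) {n : Type*} (X : Matrix (Fin N) n ℝ) :
    (1 - DbarM a ι) * X = of fun i => (2 + dIn a i)⁻¹ • ∑ j, lapLbar a ι i j • X j := by
  ext i s
  rw [one_sub_DbarM a ι hd, Matrix.mul_assoc, diagonal_mul]
  simp [mul_apply]

variable {a}

theorem two_add_dIn_ne_zero (ha : ∀ i j, 0 ≤ a i j) (i : Fin N) : 2 + dIn a i ≠ 0 :=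
  (add_pos_of_pos_of_nonneg two_pos (Finset.sum_nonneg fun j _ => ha i j)).ne'

theorem lapLbar_apply {i : Fin N} (hi : a i i = 0) (j : Fin N) :
    lapLbar a ι i j = (if i = j then dIn a i + ι i else 0) - a i j := by
  obtain rfl | hij := eq_or_ne i j
  · simp [lapLbar, lapL, hi]
  · simp [lapLbar, lapL, hij]

theorem sum_smul_sub_add_smul_sub_eq_sum_lapLbar_smul {E : Type*} [AddCommGroup E] [Module ℝ E]
    {i : Fin N} (hi : a i i = 0) (y : Fin N → E) (r : E) :
    ∑ j, a i j • (y i - y j) + ι i • (y i - r) = ∑ j, lapLbar a ι i j • (y j - r) := by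
  simp only [lapLbar_apply ι hi, sub_smul, Finset.sum_sub_distrib, ite_smul, zero_smul,
    Finset.sum_ite_eq, Finset.mem_univ, if_true, smul_sub, ← Finset.sum_smul, add_smul, dIn]
  abel

end Network

/-- Here `w i k` is the input acting on agent `i` at time `k`, `u_i(k - κ_i)` in the paper. -/
theorem partialstate_error_dynamics_general {N : ℕ} {n m q : Type*} [Fintype n] [Fintype m]
    [Fintype q] (A : Matrix n n ℝ) (B : Matrix n m ℝ) (C : Matrix q n ℝ) (F : Matrix n q ℝ)
    (a : Fin N → Fin N → ℝ) (ι : Fin N → ℝ)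
    (hd : ∀ i, 2 + dIn a i ≠ 0) (hdiag : ∀ i, a i i = 0)
    (xr : ℕ → n → ℝ) (hxr : ∀ k, xr (k + 1) = A *ᵥ xr k)
    (yr : ℕ → q → ℝ) (hyr : ∀ k, yr k = C *ᵥ xr k)
    (x xhat χ : Fin N → ℕ → n → ℝ) (y : Fin N → ℕ → q → ℝ) (w : Fin N → ℕ → m → ℝ)
    (hy : ∀ i k, y i k = C *ᵥ x i k)
    (hx : ∀ i k, x i (k + 1) = A *ᵥ x i k + B *ᵥ w i k)
    (hxhat : ∀ i k, xhat i (k + 1) = A *ᵥ xhat i k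
      + B *ᵥ ((2 + dIn a i)⁻¹ • ∑ j, lapLbar a ι i j • w j k)
      + F *ᵥ ((2 + dIn a i)⁻¹ • (∑ j, a i j • (y i k - y j k) + ι i • (y i k - yr k))
        - C *ᵥ xhat i k))
    (hχ : ∀ i k, χ i (k + 1) = A *ᵥ χ i k + B *ᵥ w i k + A *ᵥ xhat i k
      - A *ᵥ ((2 + dIn a i)⁻¹ • ∑ j, lapLbar a ι i j • χ j k)) :
    (∀ k,
      (fun p : Fin N × n =>
          ∑ j, (1 - DbarM a ι) p.1 j * (x j (k + 1) p.2 - xr (k + 1) p.2) - xhat p.1 (k + 1) p.2)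
      = ((1 : Matrix (Fin N) (Fin N) ℝ) ⊗ₖ (A - F * C)) *ᵥ
          fun p => ∑ j, (1 - DbarM a ι) p.1 j * (x j k p.2 - xr k p.2) - xhat p.1 k p.2) ∧
    (∀ k,
      (fun p : Fin N × n => (x p.1 (k + 1) p.2 - xr (k + 1) p.2) - χ p.1 (k + 1) p.2)
      = (DbarM a ι ⊗ₖ A) *ᵥ (fun p => (x p.1 k p.2 - xr k p.2) - χ p.1 k p.2)
        + ((1 : Matrix (Fin N) (Fin N) ℝ) ⊗ₖ A) *ᵥ
          fun p => ∑ j, (1 - DbarM a ι) p.1 j * (x j k p.2 - xr k p.2) - xhat p.1 k p.2) := by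
  have measurement (i : Fin N) (k : ℕ) :
      ∑ j, a i j • (y i k - y j k) + ι i • (y i k - yr k)
        = ∑ j, lapLbar a ι i j • C *ᵥ (x j k - xr k) := by
    rw [sum_smul_sub_add_smul_sub_eq_sum_lapLbar_smul ι (hdiag i) (y · k)]
    simp only [hy, hyr, mulVec_sub]
  have trajectory : IsProtocolTrajectory (DbarM a ι) A B C F (fun k => of fun i => x i k - xr k)
      (fun k => of fun i => w i k) (fun k => of fun i => xhat i k)
      (fun k => of fun i => χ i k) := by
    refine ⟨fun k => ?_, fun k => ?_, fun k => ?_⟩ <;>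
      simp only [mul_transpose_eq_of_mulVec, one_sub_DbarM_mul a ι hd] <;> funext i
    · change x i (k + 1) - xr (k + 1) = A *ᵥ (x i k - xr k) + B *ᵥ w i k
      rw [hx, hxr, mulVec_sub, add_sub_right_comm]
    · exact (hxhat i k).trans (by rw [measurement]; rfl)
    · exact hχ i k
  exact ⟨trajectory.vec_observerError_succ, trajectory.vec_protocolError_succ⟩

/-- for the partial-state-coupling protocol, with
`ē = ((I − D̄) ⊗ I) x̃ − x̂` and `e = x̃ − χ` (where `x̃_i = x_i − x_r`), one has
`ē(k+1) = (I ⊗ (A − FC)) ē(k)` and `e(k+1) = (D̄ ⊗ A) e(k) + (I ⊗ A) ē(k)`.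
Time is shifted by `κbar`, so actual time `k` corresponds to index `k + κbar`
for the agent signals. -/
theorem partialstate_error_dynamics {n m q N : ℕ}
    (A : Matrix (Fin n) (Fin n) ℝ) (B : Matrix (Fin n) (Fin m) ℝ)
    (C : Matrix (Fin q) (Fin n) ℝ) (F : Matrix (Fin n) (Fin q) ℝ)
    (a : Fin N → Fin N → ℝ) (ι : Fin N → ℝ)
    (ha : ∀ i j, 0 ≤ a i j) (hdiag : ∀ i, a i i = 0) (hι : ∀ i, ι i = 0 ∨ ι i = 1)
    (κbar : ℕ) (κ : Fin N → ℕ) (hκ : ∀ i, κ i ≤ κbar)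
    (xr : ℕ → Fin n → ℝ) (hxr : ∀ k : ℕ, xr (k + 1) = A.mulVec (xr k))
    (yr : ℕ → Fin q → ℝ) (hyr : ∀ k : ℕ, yr k = C.mulVec (xr k))
    (x xhat χ : Fin N → ℕ → Fin n → ℝ) (y : Fin N → ℕ → Fin q → ℝ)
    (u : Fin N → ℕ → Fin m → ℝ)
    (hy : ∀ i k, y i k = C.mulVec (x i k))
    (hx : ∀ i k, x i (k + κbar + 1)
        = A.mulVec (x i (k + κbar)) + B.mulVec (u i (k + κbar - κ i)))
    (hxhat : ∀ i k, xhat i (k + κbar + 1)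
        = A.mulVec (xhat i (k + κbar))
          + B.mulVec ((2 + dIn a i)⁻¹ • ∑ j, lapLbar a ι i j • u j (k + κbar - κ j))
          + F.mulVec ((2 + dIn a i)⁻¹ •
              (∑ j, a i j • (y i (k + κbar) - y j (k + κbar))
                + ι i • (y i (k + κbar) - yr k))
            - C.mulVec (xhat i (k + κbar))))
    (hχ : ∀ i k, χ i (k + κbar + 1)
        = A.mulVec (χ i (k + κbar)) + B.mulVec (u i (k + κbar - κ i))
          + A.mulVec (xhat i (k + κbar))
          - A.mulVec ((2 + dIn a i)⁻¹ • ∑ j, lapLbar a ι i j • χ j (k + κbar))) :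
    (∀ k : ℕ,
      (fun p : Fin N × Fin n =>
          (∑ j, ((1 : Matrix (Fin N) (Fin N) ℝ) - DbarM a ι) p.1 j
              * (x j (k + 1 + κbar) p.2 - xr (k + 1) p.2))
            - xhat p.1 (k + 1 + κbar) p.2)
      = ((1 : Matrix (Fin N) (Fin N) ℝ) ⊗ₖ (A - F * C)).mulVec
          (fun p : Fin N × Fin n =>
            (∑ j, ((1 : Matrix (Fin N) (Fin N) ℝ) - DbarM a ι) p.1 j
                * (x j (k + κbar) p.2 - xr k p.2))
              - xhat p.1 (k + κbar) p.2)) ∧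
    (∀ k : ℕ,
      (fun p : Fin N × Fin n =>
          (x p.1 (k + 1 + κbar) p.2 - xr (k + 1) p.2) - χ p.1 (k + 1 + κbar) p.2)
      = (DbarM a ι ⊗ₖ A).mulVec
          (fun p : Fin N × Fin n =>
            (x p.1 (k + κbar) p.2 - xr k p.2) - χ p.1 (k + κbar) p.2)
        + ((1 : Matrix (Fin N) (Fin N) ℝ) ⊗ₖ A).mulVec
          (fun p : Fin N × Fin n =>
            (∑ j, ((1 : Matrix (Fin N) (Fin N) ℝ) - DbarM a ι) p.1 j
                * (x j (k + κbar) p.2 - xr k p.2))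
              - xhat p.1 (k + κbar) p.2)) := by
  simp only [add_right_comm _ κbar 1] at hx hxhat hχ
  exact partialstate_error_dynamics_general A B C F a ι (two_add_dIn_ne_zero ha) hdiag xr hxr yr hyr
    (fun i k => x i (k + κbar)) (fun i k => xhat i (k + κbar)) (fun i k => χ i (k + κbar))
    (fun i k => y i (k + κbar)) (fun i k => u i (k + κbar - κ i)) (fun i k => hy i (k + κbar))
    hx hxhat hχ

end
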